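/- Let m, n be positive integers, ε = 1 or −1, and let w be a real-analytic solution of x^m w_yy + ε y^n w_xx = 0 on a square |x| < R, |y| < R, with expansion w(x,y) = Σ_{j=0}^∞ α_j(x) y^j. Write the power series α_0(x) = Σ_j a_j x^j. Then a_j = 0 for every index j which is not of the form q(m+2) or q(m+2)+1 with q a nonnegative integer; equivalently, there exist real-analytic functions h^1 and h^2 of one variable such that α_0(x) = h^1(x^{m+2}) + x h^2(x^{m+2}) on (−R,R). -/

import Mathlib

noncomputable section

/-- Dot product of two 3-vectors (ℂ-bilinear extension when over ℂ). -/
def dot3 {R : Type*} [CommRing R] (v w : Fin 3 → R) : R :=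
  v 0 * w 0 + v 1 * w 1 + v 2 * w 2

/-- Cross product of two 3-vectors (ℂ-bilinear extension when over ℂ). -/
def cross3 {R : Type*} [CommRing R] (v w : Fin 3 → R) : Fin 3 → R :=
  ![v 1 * w 2 - v 2 * w 1, v 2 * w 0 - v 0 * w 2, v 0 * w 1 - v 1 * w 0]

/-- Euclidean norm of a real 3-vector. -/
def enorm3 (v : Fin 3 → ℝ) : ℝ := Real.sqrt (dot3 v v)

/-- Partial derivative with respect to the first variable `s`. -/
def pds {E : Type*} [NormedAddCommGroup E] [NormedSpace ℝ E]
    (f : ℝ × ℝ → E) (p : ℝ × ℝ) : E :=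
  deriv (fun s => f (s, p.2)) p.1

/-- Partial derivative with respect to the second variable `t`. -/
def pdt {E : Type*} [NormedAddCommGroup E] [NormedSpace ℝ E]
    (f : ℝ × ℝ → E) (p : ℝ × ℝ) : E :=
  deriv (fun t => f (p.1, t)) p.2

/-- Componentwise `s`-derivative of a 3-vector valued map. -/
def vds (V : ℝ × ℝ → Fin 3 → ℝ) (p : ℝ × ℝ) : Fin 3 → ℝ := fun i => pds (fun q => V q i) p

/-- Componentwise `t`-derivative of a 3-vector valued map. -/
def vdt (V : ℝ × ℝ → Fin 3 → ℝ) (p : ℝ × ℝ) : Fin 3 → ℝ := fun i => pdt (fun q => V q i) p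

/-!
Only the traces `u_k(x) = ∂_y^k w(x, 0)` matter, and `u_0 = α_0`. Comparing the coefficients of
`y^(k+n)` in the equation gives `u_k'' = c · x^m · u_{k+n+2}` for some constant `c`. Hence the
Taylor coefficient of order `j` of `u_k` at `0` is a multiple of the one of order `j - (m + 2)` of
`u_{k+n+2}`, and vanishes when `2 ≤ j < m + 2`. Descending in steps of `m + 2`, every coefficient
of `u_0` whose order is not `0` or `1` modulo `m + 2` vanishes; splitting the power series of `α_0`
along residue classes modulo `m + 2` then leaves only two summands.
-/

open Filter Finset
open scoped Topology ContDiff Nat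

section PowerSeries

variable {𝕜 E : Type*} [RCLike 𝕜] [NormedAddCommGroup E] [NormedSpace 𝕜 E] {c : ℕ → E} {R : ℝ}

theorem ofReal_le_radius_mkPiRing
    (hc : ∀ z : 𝕜, ‖z‖ < R → Summable fun j ↦ z ^ j • c j) :
    ENNReal.ofReal R ≤ FormalMultilinearSeries.radius
      fun j ↦ ContinuousMultilinearMap.mkPiRing 𝕜 (Fin j) (c j) := by
  refine ENNReal.le_of_forall_nnreal_lt fun r hr ↦ ?_
  have hrR : ‖((r : ℝ) : 𝕜)‖ < R := by
    simpa [← ENNReal.ofReal_coe_nnreal, ENNReal.ofReal_lt_ofReal_iff'] using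
      (ENNReal.lt_ofReal_iff_toReal_lt ENNReal.coe_ne_top).1 hr
  refine FormalMultilinearSeries.le_radius_of_tendsto _ (l := ‖(0 : E)‖) ?_
  refine (hc _ hrR).tendsto_atTop_zero.norm.congr fun j ↦ ?_
  simp [ContinuousMultilinearMap.norm_mkPiRing, norm_smul, mul_comm]

theorem hasFPowerSeriesOnBall_mkPiRing {f : 𝕜 → E} (hR : 0 < R)
    (hf : ∀ z : 𝕜, ‖z‖ < R → HasSum (fun j ↦ z ^ j • c j) (f z)) :
    HasFPowerSeriesOnBall f (fun j ↦ ContinuousMultilinearMap.mkPiRing 𝕜 (Fin j) (c j)) 0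
      (ENNReal.ofReal R) where
  r_le := ofReal_le_radius_mkPiRing fun z hz ↦ (hf z hz).summable
  r_pos := ENNReal.ofReal_pos.2 hR
  hasSum {z} hz := by
    rw [Metric.eball_ofReal, mem_ball_zero_iff] at hz
    simpa using hf z hz

theorem iteratedDeriv_zero_of_hasSum [CompleteSpace E] {f : 𝕜 → E} (hR : 0 < R)
    (hf : ∀ z : 𝕜, ‖z‖ < R → HasSum (fun j ↦ z ^ j • c j) (f z)) (j : ℕ) :
    iteratedDeriv j f 0 = j ! • c j := by
  simpa [iteratedDeriv] using ((hasFPowerSeriesOnBall_mkPiRing hR hf).factorial_smul 1 j).symm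

theorem summable_pow_mul_norm_of_lt
    (hc : ∀ z : 𝕜, ‖z‖ < R → Summable fun j ↦ z ^ j • c j) {s : ℝ} (hs : 0 ≤ s) (hsR : s < R) :
    Summable fun j ↦ s ^ j * ‖c j‖ := by
  lift s to NNReal using hs
  have hlt : (s : ENNReal) < ENNReal.ofReal R :=
    (ENNReal.lt_ofReal_iff_toReal_lt ENNReal.coe_ne_top).2 hsR
  simpa [ContinuousMultilinearMap.norm_mkPiRing, mul_comm] using
    FormalMultilinearSeries.summable_norm_mul_pow _ (hlt.trans_le (ofReal_le_radius_mkPiRing hc))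

/-- The multisection `∑ c_{r + M q} t^q` of the power series `∑ c_j x^j`: it collects the
coefficients whose index is `r` modulo `M`, in the variable `t = x ^ M`. Where the series diverges
the value is `0`. -/
def multisection (c : ℕ → E) (M r : ℕ) (t : 𝕜) : E := ∑' q, t ^ q • c (r + M * q)

theorem summable_multisection [CompleteSpace E] {M : ℕ} (hM : M ≠ 0) (r : ℕ) (hR : 0 < R)
    (hc : ∀ z : 𝕜, ‖z‖ < R → Summable fun j ↦ z ^ j • c j) {t : 𝕜} (ht : ‖t‖ < R ^ M) :
    Summable fun q ↦ t ^ q • c (r + M * q) := by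
  obtain ⟨s, hts, hs, hsR⟩ : ∃ s : ℝ, ‖t‖ < s ^ M ∧ 0 < s ∧ s < R :=
    (((((continuous_pow M).tendsto R).mono_left nhdsWithin_le_nhds).eventually_const_lt ht).and
      (Ioo_mem_nhdsLT hR)).exists
  have hinj : Function.Injective fun q ↦ r + M * q :=
    (add_right_injective r).comp (mul_right_injective₀ hM)
  refine .of_norm_bounded
    (((summable_pow_mul_norm_of_lt hc hs.le hsR).comp_injective hinj).mul_left (s ^ r)⁻¹)
    fun q ↦ ?_
  calc ‖t ^ q • c (r + M * q)‖ = ‖t‖ ^ q * ‖c (r + M * q)‖ := by rw [norm_smul, norm_pow]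
    _ ≤ (s ^ M) ^ q * ‖c (r + M * q)‖ := by gcongr
    _ = (s ^ r)⁻¹ * (s ^ (r + M * q) * ‖c (r + M * q)‖) := by
      rw [pow_add, pow_mul]; field_simp

theorem analyticOnNhd_multisection [CompleteSpace E] {M : ℕ} (hM : M ≠ 0) (r : ℕ) (hR : 0 < R)
    (hc : ∀ z : 𝕜, ‖z‖ < R → Summable fun j ↦ z ^ j • c j) :
    AnalyticOnNhd 𝕜 (multisection c M r) (Metric.ball (0 : 𝕜) (R ^ M)) := by
  rw [← Metric.eball_ofReal]
  exact (hasFPowerSeriesOnBall_mkPiRing (pow_pos hR M) fun _ ht ↦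
    (summable_multisection hM r hR hc ht).hasSum).analyticOnNhd

theorem tsum_pow_smul_eq_sum_multisection [CompleteSpace E] {M : ℕ} (hM : M ≠ 0) {x : 𝕜}
    (hx : Summable fun j ↦ x ^ j • c j) :
    ∑' j, x ^ j • c j = ∑ r ∈ range M, x ^ r • multisection c M r (x ^ M) := by
  obtain ⟨N, rfl⟩ := Nat.exists_eq_succ_of_ne_zero hM
  rw [Nat.sumByResidueClasses hx (N + 1), ← Fin.sum_univ_eq_sum_range
    (fun r ↦ x ^ r • multisection c (N + 1) r (x ^ (N + 1)))]
  refine Finset.sum_congr rfl fun r _ ↦ ?_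
  simp only [multisection, ← tsum_const_smul'', pow_add, pow_mul, mul_smul]
  rfl

theorem tsum_pow_smul_eq_multisection_add [CompleteSpace E] {M : ℕ} (hM : 2 ≤ M)
    (hc0 : ∀ j, j % M ≠ 0 → j % M ≠ 1 → c j = 0) {x : 𝕜} (hx : Summable fun j ↦ x ^ j • c j) :
    ∑' j, x ^ j • c j = multisection c M 0 (x ^ M) + x • multisection c M 1 (x ^ M) := by
  have hzero : ∀ r ∈ range M, r ∉ range 2 → x ^ r • multisection c M r (x ^ M) = 0 := by
    intro r hrM hr2
    have hmod (q : ℕ) : (r + M * q) % M = r := by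
      rw [Nat.add_mul_mod_self_left, Nat.mod_eq_of_lt (mem_range.1 hrM)]
    have hr : r ≠ 0 ∧ r ≠ 1 := by rw [mem_range, not_lt] at hr2; omega
    simp [multisection, fun q ↦ hc0 (r + M * q) (by simp [hmod, hr]) (by simp [hmod, hr])]
  rw [tsum_pow_smul_eq_sum_multisection (two_pos.trans_le hM).ne' hx,
    ← sum_subset (range_subset_range.2 hM) hzero, sum_range_succ, sum_range_one, pow_zero,
    one_smul, pow_one]

end PowerSeries

section IteratedDeriv

variable {𝕜 E : Type*} [NontriviallyNormedField 𝕜] [NormedAddCommGroup E] [NormedSpace 𝕜 E]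

theorem deriv_fun_id_smul_eventuallyEq {v : 𝕜 → E} {x : 𝕜} (hv : ContDiffAt 𝕜 1 v x) :
    deriv (fun y ↦ y • v y) =ᶠ[𝓝 x] fun y ↦ y • deriv v y + v y :=
  (hv.eventually (by simp)).mono fun y hy ↦ by
    simp [deriv_fun_smul differentiableAt_fun_id (hy.differentiableAt one_ne_zero)]

theorem iteratedDeriv_succ_fun_id_smul {j : ℕ} {v : 𝕜 → E} {x : 𝕜}
    (hv : ContDiffAt 𝕜 (j + 1 : ℕ) v x) :
    iteratedDeriv (j + 1) (fun y ↦ y • v y) x =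
      x • iteratedDeriv (j + 1) v x + (j + 1) • iteratedDeriv j v x := by
  induction j generalizing v with
  | zero => simp [iteratedDeriv_one, (deriv_fun_id_smul_eventuallyEq hv).eq_of_nhds]
  | succ j ih =>
    have hv0 : ContDiffAt 𝕜 (j + 1 : ℕ) v x := hv.of_le (mod_cast Nat.le_succ _)
    have hv1 : ContDiffAt 𝕜 (j + 1 : ℕ) (deriv v) x := hv.derivWithin (by norm_cast)
    have hv2 : ContDiffAt 𝕜 1 v x := hv.of_le (mod_cast Nat.succ_pos _)
    have hsmul : ContDiffAt 𝕜 (j + 1 : ℕ) (fun y ↦ y • deriv v y) x := contDiffAt_id.smul hv1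
    rw [iteratedDeriv_succ', (deriv_fun_id_smul_eventuallyEq hv2).iteratedDeriv_eq,
      iteratedDeriv_fun_add hsmul hv0, ih hv1, ← iteratedDeriv_succ',
      ← iteratedDeriv_succ', add_assoc, ← succ_nsmul]

theorem iteratedDeriv_fun_pow_smul_zero (n j : ℕ) {v : 𝕜 → E} (hv : ContDiffAt 𝕜 j v 0) :
    iteratedDeriv j (fun y ↦ y ^ n • v y) 0 =
      j.descFactorial n • iteratedDeriv (j - n) v 0 := by
  induction n generalizing j with
  | zero => simp
  | succ n ih =>
    cases j with
    | zero => simp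
    | succ j =>
      have hv' : ContDiffAt 𝕜 j v 0 := hv.of_le (by gcongr; omega)
      simp only [pow_succ', mul_smul]
      rw [iteratedDeriv_succ_fun_id_smul (by fun_prop), ih j hv', zero_smul, zero_add, smul_smul,
        Nat.succ_descFactorial_succ, Nat.add_sub_add_right]

theorem iteratedDeriv_zero_eq_zero_of_deriv_deriv_eq {ι : Type*} {m : ℕ} {f : ι → 𝕜 → E}
    (hf : ∀ i, ContDiffAt 𝕜 ∞ (f i) 0)
    (hrec : ∀ i, ∃ (c : 𝕜) (l : ι), deriv (deriv (f i)) =ᶠ[𝓝 0] fun x ↦ c • x ^ m • f l x)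
    (i : ι) {j : ℕ} (h0 : j % (m + 2) ≠ 0) (h1 : j % (m + 2) ≠ 1) :
    iteratedDeriv j (f i) 0 = 0 := by
  induction j using Nat.strong_induction_on generalizing i with
  | _ j ih =>
    obtain ⟨k, rfl⟩ : ∃ k, j = k + 2 := Nat.exists_eq_add_of_le' <| by
      by_contra! hj
      have := Nat.mod_eq_of_lt (show j < m + 2 by omega)
      omega
    obtain ⟨c, l, hcl⟩ := hrec i
    have hfl : ContDiffAt 𝕜 k (f l) 0 := (hf l).of_le (mod_cast le_top)
    rw [iteratedDeriv_succ', iteratedDeriv_succ', hcl.iteratedDeriv_eq,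
      iteratedDeriv_fun_const_smul_field, iteratedDeriv_fun_pow_smul_zero m k hfl]
    rcases lt_or_ge k m with hkm | hmk
    · simp [Nat.descFactorial_of_lt hkm]
    · have hmod : (k - m) % (m + 2) = (k + 2) % (m + 2) := by
        rw [← Nat.add_mod_right (k - m)]; congr 1; omega
      rw [ih (k - m) (by omega) l (hmod ▸ h0) (hmod ▸ h1), smul_zero, smul_zero]

end IteratedDeriv

section PartialDerivatives

variable {E : Type*} [NormedAddCommGroup E] [NormedSpace ℝ E] {f g : ℝ × ℝ → E} {p : ℝ × ℝ}

theorem pds_eq_fderiv (hf : DifferentiableAt ℝ f p) : pds f p = fderiv ℝ f p (1, 0) :=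
  (hf.hasFDerivAt.comp_hasDerivAt (f := fun s ↦ (s, p.2)) p.1
    ((hasDerivAt_id p.1).prodMk (hasDerivAt_const _ _))).deriv

theorem pdt_eq_fderiv (hf : DifferentiableAt ℝ f p) : pdt f p = fderiv ℝ f p (0, 1) :=
  (hf.hasFDerivAt.comp_hasDerivAt (f := fun t ↦ (p.1, t)) p.2
    ((hasDerivAt_const _ _).prodMk (hasDerivAt_id p.2))).deriv

theorem pds_eventuallyEq_fderiv (hf : ContDiffAt ℝ 1 f p) :
    pds f =ᶠ[𝓝 p] fun q ↦ fderiv ℝ f q (1, 0) :=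
  (hf.eventually (by simp)).mono fun _ hq ↦ pds_eq_fderiv (hq.differentiableAt one_ne_zero)

theorem pdt_eventuallyEq_fderiv (hf : ContDiffAt ℝ 1 f p) :
    pdt f =ᶠ[𝓝 p] fun q ↦ fderiv ℝ f q (0, 1) :=
  (hf.eventually (by simp)).mono fun _ hq ↦ pdt_eq_fderiv (hq.differentiableAt one_ne_zero)

theorem eventuallyEq_pds (h : f =ᶠ[𝓝 p] g) : pds f =ᶠ[𝓝 p] pds g :=
  h.eventually_nhds.mono fun q hq ↦
    EventuallyEq.deriv_eq (((Continuous.prodMk_left q.2).tendsto q.1).eventually hq)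

theorem eventuallyEq_pdt (h : f =ᶠ[𝓝 p] g) : pdt f =ᶠ[𝓝 p] pdt g :=
  h.eventually_nhds.mono fun q hq ↦
    EventuallyEq.deriv_eq (((Continuous.prodMk_right q.1).tendsto q.2).eventually hq)

theorem eventuallyEq_iterate_pdt (h : f =ᶠ[𝓝 p] g) (k : ℕ) : pdt^[k] f =ᶠ[𝓝 p] pdt^[k] g := by
  induction k with
  | zero => exact h
  | succ k ih => simpa only [Function.iterate_succ_apply'] using eventuallyEq_pdt ih

theorem contDiffAt_pds (hf : ContDiffAt ℝ ∞ f p) : ContDiffAt ℝ ∞ (pds f) p :=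
  ((hf.fderiv_right (m := ∞) le_rfl).clm_apply contDiffAt_const).congr_of_eventuallyEq
    (pds_eventuallyEq_fderiv (hf.of_le (mod_cast le_top)))

theorem contDiffAt_pdt (hf : ContDiffAt ℝ ∞ f p) : ContDiffAt ℝ ∞ (pdt f) p :=
  ((hf.fderiv_right (m := ∞) le_rfl).clm_apply contDiffAt_const).congr_of_eventuallyEq
    (pdt_eventuallyEq_fderiv (hf.of_le (mod_cast le_top)))

theorem contDiffAt_iterate_pdt (hf : ContDiffAt ℝ ∞ f p) (k : ℕ) :
    ContDiffAt ℝ ∞ (pdt^[k] f) p := by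
  induction k with
  | zero => exact hf
  | succ k ih => simpa only [Function.iterate_succ_apply'] using contDiffAt_pdt ih

theorem pds_pdt_comm (hf : ContDiffAt ℝ 2 f p) : pds (pdt f) p = pdt (pds f) p := by
  have hf1 : ContDiffAt ℝ 1 f p := hf.of_le one_le_two
  have hd : DifferentiableAt ℝ (fderiv ℝ f) p :=
    (hf.fderiv_right (m := 1) (by norm_num [one_add_one_eq_two])).differentiableAt one_ne_zero
  have hsymm : fderiv ℝ (fderiv ℝ f) p (1, 0) (0, 1) = fderiv ℝ (fderiv ℝ f) p (0, 1) (1, 0) :=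
    hf.isSymmSndFDerivAt (by simp) (1, 0) (0, 1)
  rw [(eventuallyEq_pds (pdt_eventuallyEq_fderiv hf1)).eq_of_nhds,
    (eventuallyEq_pdt (pds_eventuallyEq_fderiv hf1)).eq_of_nhds,
    pds_eq_fderiv (by fun_prop), pdt_eq_fderiv (by fun_prop),
    fderiv_clm_apply hd (by fun_prop), fderiv_clm_apply hd (by fun_prop)]
  simpa using hsymm

theorem pds_iterate_pdt_comm (hf : ContDiffAt ℝ ∞ f p) (k : ℕ) :
    pds (pdt^[k] f) =ᶠ[𝓝 p] pdt^[k] (pds f) := by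
  induction k with
  | zero => exact .rfl
  | succ k ih =>
    have hcomm : pds (pdt (pdt^[k] f)) =ᶠ[𝓝 p] pdt (pds (pdt^[k] f)) :=
      (((contDiffAt_iterate_pdt hf k).of_le (WithTop.coe_le_coe.2 le_top)).eventually
        (by simp)).mono fun _ hq ↦ pds_pdt_comm hq
    simpa only [Function.iterate_succ_apply'] using hcomm.trans (eventuallyEq_pdt ih)

theorem pds_pds_iterate_pdt_comm (hf : ContDiffAt ℝ ∞ f p) (k : ℕ) :
    pds (pds (pdt^[k] f)) =ᶠ[𝓝 p] pdt^[k] (pds (pds f)) :=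
  (eventuallyEq_pds (pds_iterate_pdt_comm hf k)).trans
    (pds_iterate_pdt_comm (contDiffAt_pds hf) k)

theorem iterate_pdt_apply (f : ℝ × ℝ → E) (k : ℕ) (p : ℝ × ℝ) :
    pdt^[k] f p = iteratedDeriv k (fun t ↦ f (p.1, t)) p.2 := by
  induction k generalizing p with
  | zero => simp
  | succ k ih =>
    rw [Function.iterate_succ_apply', iteratedDeriv_succ]
    exact congrArg (deriv · p.2) (funext fun t ↦ ih (p.1, t))

theorem iterate_pdt_fst_smul (g : ℝ → ℝ) (f : ℝ × ℝ → E) (k : ℕ) (p : ℝ × ℝ) :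
    pdt^[k] (fun q ↦ g q.1 • f q) p = g p.1 • pdt^[k] f p := by
  simp only [iterate_pdt_apply, iteratedDeriv_fun_const_smul_field]

theorem iterate_pdt_snd_pow_smul (n k : ℕ) {x : ℝ} (hf : ContDiffAt ℝ k f (x, 0)) :
    pdt^[k] (fun q ↦ q.2 ^ n • f q) (x, 0) =
      k.descFactorial n • pdt^[k - n] f (x, 0) := by
  simp only [iterate_pdt_apply]
  exact iteratedDeriv_fun_pow_smul_zero n k
    (hf.comp (f := fun t ↦ (x, t)) 0 (contDiffAt_const.prodMk contDiffAt_id))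

end PartialDerivatives

section DegenerateEquation

variable {E : Type*} [NormedAddCommGroup E] [NormedSpace ℝ E] {m n : ℕ} {ε : ℝ} {w : ℝ × ℝ → E}

theorem deriv_deriv_iterate_pdt_eq (hε : ε ≠ 0) (hw : ContDiffAt ℝ ∞ w 0)
    (hsol : ∀ᶠ p in 𝓝 (0 : ℝ × ℝ), p.1 ^ m • pdt (pdt w) p + ε • p.2 ^ n • pds (pds w) p = 0)
    (k : ℕ) :
    deriv (deriv fun x ↦ pdt^[k] w (x, 0)) =ᶠ[𝓝 0] fun x ↦
      (-(ε * (k + n).descFactorial n)⁻¹) • x ^ m • pdt^[k + n + 2] w (x, 0) := by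
  have hd : (ε * (k + n).descFactorial n : ℝ) ≠ 0 :=
    mul_ne_zero hε (mod_cast mt Nat.descFactorial_eq_zero_iff_lt.1 (by omega))
  have haxis : Tendsto (fun x : ℝ ↦ (x, (0 : ℝ))) (𝓝 0) (𝓝 0) :=
    (Continuous.prodMk_left 0).tendsto' 0 0 rfl
  have hsmooth : ∀ᶠ p in 𝓝 (0 : ℝ × ℝ), ContDiffAt ℝ (k + n : ℕ) (pds (pds w)) p :=
    ((contDiffAt_pds (contDiffAt_pds hw)).of_le (mod_cast le_top)).eventually
      (mod_cast ENat.natCast_ne_top _)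
  have hsol' : (fun p ↦ p.1 ^ m • pdt (pdt w) p) =ᶠ[𝓝 0]
      fun p ↦ (-ε) • p.2 ^ n • pds (pds w) p :=
    hsol.mono fun p hp ↦ by
      simpa only [neg_smul] using eq_neg_of_add_eq_zero_left hp
  filter_upwards [haxis.eventually (eventuallyEq_iterate_pdt hsol' (k + n)),
    haxis.eventually hsmooth, haxis.eventually (pds_pds_iterate_pdt_comm hw k)]
    with x hx hsx hcomm
  rw [iterate_pdt_fst_smul (· ^ m), iterate_pdt_fst_smul (fun _ ↦ -ε),
    iterate_pdt_snd_pow_smul n (k + n) hsx, Nat.add_sub_cancel, ← hcomm] at hx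
  have hcoeff : x ^ m • pdt^[k + n + 2] w (x, 0) =
      (-(ε * (k + n).descFactorial n)) • deriv (deriv fun x ↦ pdt^[k] w (x, 0)) x := by
    rw [← neg_mul, mul_smul, Nat.cast_smul_eq_nsmul]
    exact hx
  rw [hcoeff, smul_smul, neg_mul_neg, inv_mul_cancel₀ hd, one_smul]

theorem iteratedDeriv_trace_zero_eq_zero (hε : ε ≠ 0) (hw : ContDiffAt ℝ ∞ w 0)
    (hsol : ∀ᶠ p in 𝓝 (0 : ℝ × ℝ), p.1 ^ m • pdt (pdt w) p + ε • p.2 ^ n • pds (pds w) p = 0)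
    {j : ℕ} (h0 : j % (m + 2) ≠ 0) (h1 : j % (m + 2) ≠ 1) :
    iteratedDeriv j (fun x ↦ w (x, 0)) 0 = 0 :=
  iteratedDeriv_zero_eq_zero_of_deriv_deriv_eq (f := fun k x ↦ pdt^[k] w (x, 0))
    (fun k ↦ (contDiffAt_iterate_pdt hw k).comp (f := fun x ↦ (x, 0)) 0
      (contDiffAt_id.prodMk contDiffAt_const))
    (fun k ↦ ⟨_, k + n + 2, deriv_deriv_iterate_pdt_eq hε hw hsol k⟩) 0 h0 h1

end DegenerateEquation

theorem alpha0_structure_general {E : Type*} [NormedAddCommGroup E] [NormedSpace ℝ E]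
    [CompleteSpace E] {m n : ℕ} {ε R : ℝ} (hε : ε ≠ 0) (hR : 0 < R) {w : ℝ × ℝ → E}
    (hw : ContDiffAt ℝ ∞ w 0)
    (hsol : ∀ᶠ p in 𝓝 (0 : ℝ × ℝ), p.1 ^ m • pdt (pdt w) p + ε • p.2 ^ n • pds (pds w) p = 0)
    {a : ℕ → E} (ha : ∀ x : ℝ, |x| < R → HasSum (fun j ↦ x ^ j • a j) (w (x, 0))) :
    (∀ j : ℕ, j % (m + 2) ≠ 0 → j % (m + 2) ≠ 1 → a j = 0) ∧
    ∃ h1 h2 : ℝ → E,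
      AnalyticOnNhd ℝ h1 (Set.Ioo (-(R ^ (m + 2))) (R ^ (m + 2))) ∧
      AnalyticOnNhd ℝ h2 (Set.Ioo (-(R ^ (m + 2))) (R ^ (m + 2))) ∧
      ∀ x : ℝ, |x| < R → w (x, 0) = h1 (x ^ (m + 2)) + x • h2 (x ^ (m + 2)) := by
  have ha0 (j : ℕ) (h0 : j % (m + 2) ≠ 0) (h1 : j % (m + 2) ≠ 1) : a j = 0 := by
    have hj := iteratedDeriv_trace_zero_eq_zero hε hw hsol h0 h1
    rw [iteratedDeriv_zero_of_hasSum hR ha, ← Nat.cast_smul_eq_nsmul ℝ] at hj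
    exact (smul_eq_zero_iff_right (mod_cast j.factorial_ne_zero)).1 hj
  have hball : Metric.ball (0 : ℝ) (R ^ (m + 2)) = Set.Ioo (-(R ^ (m + 2))) (R ^ (m + 2)) := by
    rw [Real.ball_eq_Ioo, zero_sub, zero_add]
  have han (r : ℕ) : AnalyticOnNhd ℝ (multisection a (m + 2) r)
      (Set.Ioo (-(R ^ (m + 2))) (R ^ (m + 2))) :=
    hball ▸ analyticOnNhd_multisection (by omega) r hR fun x hx ↦ (ha x hx).summable
  refine ⟨ha0, multisection a (m + 2) 0, multisection a (m + 2) 1, han 0, han 1, fun x hx ↦ ?_⟩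
  rw [← (ha x hx).tsum_eq, tsum_pow_smul_eq_multisection_add (by omega) ha0 (ha x hx).summable]

/-- structure of `α₀`.
For an analytic solution `w = Σ_j α_j(x) y^j` of `x^m w_yy + ε y^n w_xx = 0` on the square,
the Taylor coefficients `a_j` of `α₀` vanish unless `j ≡ 0` or `1 (mod m+2)`; equivalently
`α₀(x) = h¹(x^{m+2}) + x h²(x^{m+2})` for some real-analytic `h¹, h²`. -/
theorem alpha0_structure
    (m n : ℕ) (hm : 0 < m) (hn : 0 < n) (ε : ℝ) (hε : ε = 1 ∨ ε = -1)
    (R : ℝ) (hR : 0 < R)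
    (w : ℝ × ℝ → ℝ)
    (hw : AnalyticOnNhd ℝ w (Set.Ioo (-R) R ×ˢ Set.Ioo (-R) R))
    (hsol : ∀ p : ℝ × ℝ, |p.1| < R → |p.2| < R →
      p.1 ^ m * pdt (pdt w) p + ε * p.2 ^ n * pds (pds w) p = 0)
    (α : ℕ → ℝ → ℝ) (hα : ∀ j, AnalyticOnNhd ℝ (α j) (Set.Ioo (-R) R))
    (hexp : ∀ x y : ℝ, |x| < R → |y| < R → HasSum (fun j => α j x * y ^ j) (w (x, y)))
    (a : ℕ → ℝ) (ha : ∀ x : ℝ, |x| < R → HasSum (fun j => a j * x ^ j) (α 0 x)) :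
    (∀ j : ℕ, j % (m + 2) ≠ 0 → j % (m + 2) ≠ 1 → a j = 0) ∧
    (∃ h1 h2 : ℝ → ℝ,
      AnalyticOnNhd ℝ h1 (Set.Ioo (-(R ^ (m + 2))) (R ^ (m + 2))) ∧
      AnalyticOnNhd ℝ h2 (Set.Ioo (-(R ^ (m + 2))) (R ^ (m + 2))) ∧
      ∀ x : ℝ, |x| < R → α 0 x = h1 (x ^ (m + 2)) + x * h2 (x ^ (m + 2))) := by
  have htrace (x : ℝ) (hx : |x| < R) : w (x, 0) = α 0 x :=
    (hexp x 0 hx (by simpa)).unique <| by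
      simpa [mul_comm] using HasSum.hasSum_at_zero (𝕜 := ℝ) (α · x)
  have hpde : ∀ᶠ p in 𝓝 (0 : ℝ × ℝ),
      p.1 ^ m • pdt (pdt w) p + ε • p.2 ^ n • pds (pds w) p = 0 := by
    filter_upwards [prod_mem_nhds (Ioo_mem_nhds (neg_lt_zero.2 hR) hR)
      (Ioo_mem_nhds (neg_lt_zero.2 hR) hR)] with p hp
    simpa [mul_assoc] using hsol p (abs_lt.2 hp.1) (abs_lt.2 hp.2)
  have hw0 : ContDiffAt ℝ ∞ w 0 := (hw 0 (by simpa)).contDiffAt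
  obtain ⟨ha0, h1, h2, han1, han2, heq⟩ := alpha0_structure_general (by grind) hR hw0 hpde
    (a := a) fun x hx ↦ by simpa [htrace x hx, mul_comm] using ha x hx
  exact ⟨ha0, h1, h2, han1, han2, fun x hx ↦ by rw [← htrace x hx, heq x hx, smul_eq_mul]⟩
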